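/- For every 0 < ε ≤ 1 there exists a constant K_ε > 1 such that for every 0 < δ ≤ 1 there exists a constant K̃_{ε,δ} > 1 such that for all r > 0, all multi-indices β ∈ ℕ^n, all N ∈ ℕ and all f ∈ E_N, ‖⟨x⟩^r ∂_x^β f‖_{L²(ℝ^n)} ≤ K̃_{ε,δ} K_ε^{|β|+r} δ^{|β|} (n+1)^{r/2} Γ( (r+|β|)/(2−ε) + 3 ) e^{N^{1−ε/2}/δ^{2−ε}} ‖f‖_{L²(ℝ^n)}. -/

import Mathlib

open MeasureTheory
open scoped BigOperators ENNReal NNReal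

noncomputable section

abbrev En (n : ℕ) := EuclideanSpace ℝ (Fin n)

/-- One-dimensional Hermite function. -/
def hermite1 (k : ℕ) (x : ℝ) : ℝ :=
  (-1 : ℝ) ^ k * ((2 ^ k * (k.factorial : ℝ) * Real.sqrt Real.pi) ^ (-(1/2 : ℝ))) *
    Real.exp (x ^ 2 / 2) * iteratedDeriv k (fun y => Real.exp (-y ^ 2)) x

/-- Tensorized Hermite function on ℝⁿ. -/
def hermiteFun (n : ℕ) (α : Fin n → ℕ) (x : En n) : ℂ :=
  ∏ j, (hermite1 (α j) (x j) : ℂ)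

/-- The span E_N of Hermite functions with |α| ≤ N. -/
def hermiteSpan (n N : ℕ) : Submodule ℂ (En n → ℂ) :=
  Submodule.span ℂ {g | ∃ α : Fin n → ℕ, (∑ j, α j) ≤ N ∧ g = hermiteFun n α}

/-- Partial derivative in direction j. -/
def pderiv1 {n : ℕ} (j : Fin n) (f : En n → ℂ) : En n → ℂ :=
  fun x => fderiv ℝ f x (EuclideanSpace.single j (1 : ℝ))

/-- Multi-index partial derivative ∂^β. -/
def pderivMulti {n : ℕ} (β : Fin n → ℕ) (f : En n → ℂ) : En n → ℂ :=
  (List.finRange n).foldr (fun j g => (pderiv1 j)^[β j] g) f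

/-- Monomial x^α. -/
def monomial (n : ℕ) (α : Fin n → ℕ) (x : En n) : ℝ := ∏ j, (x j) ^ (α j)

/-- L² norm on ℝⁿ. -/
def L2norm (n : ℕ) (f : En n → ℂ) : ℝ := Real.sqrt (∫ x, ‖f x‖ ^ 2)

/-- Japanese bracket ⟨x⟩. -/
def jap (n : ℕ) (x : En n) : ℝ := Real.sqrt (1 + ‖x‖ ^ 2)

/-! ### One-dimensional Hermite functions -/

def gD (k : ℕ) : ℝ → ℝ := iteratedDeriv k (fun y : ℝ => Real.exp (-y ^ 2))

lemma gD_hasDerivAt (k : ℕ) (x : ℝ) : HasDerivAt (gD k) (gD (k + 1) x) x := by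
  have hc : ContDiff ℝ (⊤ : ℕ∞) (fun y : ℝ => Real.exp (-y ^ 2)) := by fun_prop
  have h := hc.differentiable_iteratedDeriv k (by exact_mod_cast ENat.natCast_lt_top k)
  unfold gD
  rw [iteratedDeriv_succ]
  exact (h x).hasDerivAt

lemma gD_zero (x : ℝ) : gD 0 x = Real.exp (-x ^ 2) := by simp [gD]

lemma gD_one (x : ℝ) : gD 1 x = -2 * x * gD 0 x := by
  have h1 := gD_hasDerivAt 0 x
  have h2 : HasDerivAt (gD 0) (Real.exp (-x ^ 2) * (-(2 * x))) x := by
    have : gD 0 = fun y : ℝ => Real.exp (-y ^ 2) := funext gD_zero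
    rw [this]
    have := ((hasDerivAt_pow 2 x).neg).exp
    simpa using this
  rw [h1.unique h2, gD_zero]; ring

lemma gD_rec (k : ℕ) : ∀ x : ℝ, gD (k + 2) x = -2 * x * gD (k + 1) x - 2 * (k + 1) * gD k x := by
  induction k with
  | zero =>
    intro x
    have h1 := gD_hasDerivAt 1 x
    have h2 : HasDerivAt (gD 1) (-2 * 1 * gD 0 x + -2 * x * gD 1 x) x := by
      have : gD 1 = fun y : ℝ => -2 * y * gD 0 y := funext gD_one
      have h3 := ((hasDerivAt_id x).const_mul (-2)).mul (gD_hasDerivAt 0 x)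
      have h4 : HasDerivAt (fun y : ℝ => -2 * y * gD 0 y) (-2 * 1 * gD 0 x + -2 * x * gD 1 x) x := h3
      rw [← this] at h4
      exact h4
    rw [h1.unique h2]; push_cast; ring_nf
  | succ k ih =>
    intro x
    have h1 := gD_hasDerivAt (k + 2) x
    have h2 : HasDerivAt (gD (k + 2)) ((-2 * 1 * gD (k + 1) x + -2 * x * gD (k + 2) x)
        - 2 * (k + 1) * gD (k + 1) x) x := by
      have : gD (k + 2) = fun y : ℝ => -2 * y * gD (k + 1) y - 2 * (k + 1) * gD k y := funext ih
      have h3 := ((((hasDerivAt_id x).const_mul (-2)).mul (gD_hasDerivAt (k + 1) x))).sub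
        ((gD_hasDerivAt k x).const_mul (2 * ((k : ℝ) + 1)))
      have h4 : HasDerivAt (fun y : ℝ => -2 * y * gD (k + 1) y - 2 * (k + 1) * gD k y)
        ((-2 * 1 * gD (k + 1) x + -2 * x * gD (k + 2) x) - 2 * (k + 1) * gD (k + 1) x) x := h3
      rw [← this] at h4
      exact h4
    rw [h1.unique h2]; push_cast; ring

def hc (k : ℕ) : ℝ := (2 ^ k * (k.factorial : ℝ) * Real.sqrt Real.pi) ^ (-(1/2 : ℝ))

lemma hc_succ (k : ℕ) : hc k = √(2 * (k + 1)) * hc (k + 1) := by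
  unfold hc
  have h : (2 : ℝ) ^ (k + 1) * ((k + 1).factorial : ℝ) * √Real.pi
      = (2 * (k + 1)) * (2 ^ k * (k.factorial : ℝ) * √Real.pi) := by
    rw [Nat.factorial_succ]; push_cast; ring
  have h2 : (0 : ℝ) < 2 * (k + 1) := by positivity
  rw [h, Real.mul_rpow (x := 2 * ((k : ℝ) + 1)) h2.le (by positivity), ← mul_assoc,
    Real.sqrt_eq_rpow (2 * ((k : ℝ) + 1)), ← Real.rpow_add h2]
  norm_num

lemma hermite1_eq (k : ℕ) (x : ℝ) :
    hermite1 k x = (-1) ^ k * hc k * Real.exp (x ^ 2 / 2) * gD k x := rfl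

lemma sqrt2_mul (k : ℕ) : √(2 * ((k : ℝ) + 1)) = √2 * √((k : ℝ) + 1) :=
  Real.sqrt_mul (by norm_num) _

lemma hermite1_x (k : ℕ) (x : ℝ) : √2 * (x * hermite1 k x)
    = √((k : ℝ) + 1) * hermite1 (k + 1) x + √(k : ℝ) * hermite1 (k - 1) x := by
  cases k with
  | zero =>
    have h := hc_succ 0
    simp only [hermite1_eq, gD_one, zero_add, h]
    have : √2 * √2 = (2 : ℝ) := Real.mul_self_sqrt (by norm_num)
    simp
    linear_combination (x * hc 1 * Real.exp (x ^ 2 / 2) * gD 0 x) * this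
  | succ k =>
    have h1 := hc_succ k
    have h2 := hc_succ (k + 1)
    rw [sqrt2_mul] at h1 h2
    simp only [hermite1_eq, gD_rec, Nat.add_sub_cancel, h1]
    rw [h2]
    have e2 : √2 * √2 = (2 : ℝ) := Real.mul_self_sqrt (by norm_num)
    have ek : √((k:ℝ) + 1) * √((k:ℝ) + 1) = (k:ℝ) + 1 := Real.mul_self_sqrt (by positivity)
    push_cast
    set a := √((k:ℝ) + 1)
    set b := √((k:ℝ) + 1 + 1)
    set s := √2
    rw [← ek]
    ring_nf
    have e2' : s ^ 2 = 2 := by rw [sq]; exact e2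
    rw [e2']
    ring

lemma hermite1_hasDerivAt' (k : ℕ) (x : ℝ) : HasDerivAt (hermite1 k)
    (x * hermite1 k x - √2 * √((k : ℝ) + 1) * hermite1 (k + 1) x) x := by
  have h : HasDerivAt (fun x => ((-1) ^ k * hc k * Real.exp (x ^ 2 / 2)) * gD k x) _ x :=
    (((((hasDerivAt_pow 2 x).div_const 2).exp).const_mul ((-1) ^ k * hc k)).mul
      (gD_hasDerivAt k x))
  have e : hermite1 k = (fun x => ((-1) ^ k * hc k * Real.exp (x ^ 2 / 2)) * gD k x) :=
    funext (hermite1_eq k)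
  rw [e]
  convert h using 1
  have h1 := hc_succ k
  rw [sqrt2_mul] at h1
  rw [hermite1_eq, h1]
  push_cast
  ring

/-- the derivative, as a ladder relation -/
def hd (k : ℕ) (x : ℝ) : ℝ :=
  (√2)⁻¹ * (√(k : ℝ) * hermite1 (k - 1) x - √((k : ℝ) + 1) * hermite1 (k + 1) x)

lemma hermite1_hasDerivAt (k : ℕ) (x : ℝ) : HasDerivAt (hermite1 k) (hd k x) x := by
  convert hermite1_hasDerivAt' k x using 1
  have h := hermite1_x k x
  have e2 : √2 * √2 = (2 : ℝ) := Real.mul_self_sqrt (by norm_num)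
  have hs : √2 ≠ (0 : ℝ) := by positivity
  unfold hd
  field_simp
  linear_combination -h + √((k : ℝ) + 1) * hermite1 (k + 1) x * e2

lemma gD_poly (k : ℕ) : ∃ p : Polynomial ℝ, ∀ x, gD k x = p.eval x * Real.exp (-x ^ 2) := by
  induction k with
  | zero => exact ⟨1, fun x => by simp [gD_zero]⟩
  | succ k ih =>
    obtain ⟨p, hp⟩ := ih
    refine ⟨p.derivative - 2 * Polynomial.X * p, fun x => ?_⟩
    have h1 := gD_hasDerivAt k x
    have h2 : HasDerivAt (gD k) (p.derivative.eval x * Real.exp (-x ^ 2)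
        + p.eval x * (Real.exp (-x ^ 2) * (-(2 * x)))) x := by
      rw [funext hp]
      have := ((hasDerivAt_pow 2 x).neg).exp
      exact (p.hasDerivAt x).mul (by simpa using this)
    rw [h1.unique h2]
    simp
    ring

lemma hermite1_poly (k : ℕ) : ∃ p : Polynomial ℝ, ∀ x,
    hermite1 k x = p.eval x * Real.exp (-x ^ 2 / 2) := by
  obtain ⟨p, hp⟩ := gD_poly k
  refine ⟨Polynomial.C ((-1) ^ k * hc k) * p, fun x => ?_⟩
  rw [hermite1_eq, hp]
  have : Real.exp (-x ^ 2 / 2) = Real.exp (x ^ 2 / 2) * Real.exp (-x ^ 2) := by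
    rw [← Real.exp_add]; ring_nf
  rw [this]
  simp
  ring

lemma poly_gauss_integrable (p : Polynomial ℝ) :
    Integrable (fun x : ℝ => p.eval x * Real.exp (-x ^ 2)) := by
  have : (fun x : ℝ => p.eval x * Real.exp (-x ^ 2)) = fun x : ℝ =>
      ∑ i ∈ Finset.range (p.natDegree + 1), p.coeff i * (x ^ (i : ℝ) * Real.exp (-1 * x ^ 2)) := by
    ext x
    rw [Polynomial.eval_eq_sum_range, Finset.sum_mul]
    refine Finset.sum_congr rfl fun i _ => ?_
    rw [Real.rpow_natCast]; ring_nf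
  rw [this]
  refine integrable_finsetSum _ fun i _ => Integrable.const_mul ?_ _
  exact integrable_rpow_mul_exp_neg_mul_sq one_pos (by
    have : (0:ℝ) ≤ i := Nat.cast_nonneg i
    linarith)

lemma hermite1_mul_integrable (k l : ℕ) :
    Integrable (fun x : ℝ => hermite1 k x * hermite1 l x) := by
  obtain ⟨p, hp⟩ := hermite1_poly k
  obtain ⟨q, hq⟩ := hermite1_poly l
  convert poly_gauss_integrable (p * q) using 2 with x
  have : Real.exp (-x ^ 2) = Real.exp (-x ^ 2 / 2) * Real.exp (-x ^ 2 / 2) := by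
    rw [← Real.exp_add]; ring_nf
  rw [hp, hq, this, Polynomial.eval_mul]; ring

def ip (k l : ℕ) : ℝ := ∫ x : ℝ, hermite1 k x * hermite1 l x

lemma ip_comm (k l : ℕ) : ip k l = ip l k := by
  unfold ip; congr 1; ext x; ring

lemma ip_parts (k l : ℕ) :
    √(l : ℝ) * ip k (l - 1) - √((l : ℝ) + 1) * ip k (l + 1)
      = -(√(k : ℝ) * ip (k - 1) l - √((k : ℝ) + 1) * ip (k + 1) l) := by
  have e1 : (fun x => hermite1 k x * hd l x) = fun x => (√2)⁻¹ *
      (√(l : ℝ) * (hermite1 k x * hermite1 (l - 1) x)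
        - √((l : ℝ) + 1) * (hermite1 k x * hermite1 (l + 1) x)) := by
    ext x; unfold hd; ring
  have e2 : (fun x => hd k x * hermite1 l x) = fun x => (√2)⁻¹ *
      (√(k : ℝ) * (hermite1 (k - 1) x * hermite1 l x)
        - √((k : ℝ) + 1) * (hermite1 (k + 1) x * hermite1 l x)) := by
    ext x; unfold hd; ring
  have h := integral_mul_deriv_eq_deriv_mul_of_integrable (u := hermite1 k) (v := hermite1 l)
    (u' := hd k) (v' := hd l) (fun x _ => hermite1_hasDerivAt k x)
    (fun x _ => hermite1_hasDerivAt l x)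
    (by
      change Integrable (fun x => hermite1 k x * hd l x)
      rw [e1]
      exact (((hermite1_mul_integrable _ _).const_mul _).sub
        ((hermite1_mul_integrable _ _).const_mul _)).const_mul _)
    (by
      change Integrable (fun x => hd k x * hermite1 l x)
      rw [e2]
      exact (((hermite1_mul_integrable _ _).const_mul _).sub
        ((hermite1_mul_integrable _ _).const_mul _)).const_mul _)
    (hermite1_mul_integrable k l)
  rw [e1, e2, integral_const_mul, integral_const_mul,
    integral_sub ((hermite1_mul_integrable _ _).const_mul _)
      ((hermite1_mul_integrable _ _).const_mul _),
    integral_sub ((hermite1_mul_integrable _ _).const_mul _)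
      ((hermite1_mul_integrable _ _).const_mul _),
    integral_const_mul, integral_const_mul, integral_const_mul, integral_const_mul] at h
  have hs : (√2)⁻¹ ≠ (0 : ℝ) := by positivity
  apply mul_left_cancel₀ hs
  unfold ip
  rw [h]; ring

lemma ip_x (k l : ℕ) :
    √(l : ℝ) * ip k (l - 1) + √((l : ℝ) + 1) * ip k (l + 1)
      = (√(k : ℝ) * ip (k - 1) l + √((k : ℝ) + 1) * ip (k + 1) l) := by
  unfold ip
  rw [← integral_const_mul, ← integral_const_mul, ← integral_const_mul, ← integral_const_mul,
    ← integral_add ((hermite1_mul_integrable _ _).const_mul _)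
      ((hermite1_mul_integrable _ _).const_mul _),
    ← integral_add ((hermite1_mul_integrable _ _).const_mul _)
      ((hermite1_mul_integrable _ _).const_mul _)]
  congr 1
  ext x
  linear_combination -hermite1 k x * hermite1_x l x + hermite1 l x * hermite1_x k x

lemma ip_ladder (k l : ℕ) : √(k : ℝ) * ip (k - 1) l = √((l : ℝ) + 1) * ip k (l + 1) := by
  linear_combination (-1 / 2) * ip_x k l + (1 / 2) * ip_parts k l

lemma ip_zero : ip 0 0 = 1 := by
  have e : ∀ x : ℝ, hermite1 0 x * hermite1 0 x = (hc 0 * hc 0) * Real.exp (-1 * x ^ 2) := by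
    intro x
    rw [hermite1_eq, gD_zero]
    have : Real.exp (-1 * x ^ 2) = Real.exp (x ^ 2 / 2) * Real.exp (-x ^ 2) *
        (Real.exp (x ^ 2 / 2) * Real.exp (-x ^ 2)) := by
      rw [← Real.exp_add, ← Real.exp_add]; ring_nf
    rw [this]; ring
  unfold ip
  simp_rw [e]
  rw [integral_const_mul, integral_gaussian]
  unfold hc
  have hp : 0 < √Real.pi := Real.sqrt_pos.mpr Real.pi_pos
  simp only [pow_zero, Nat.factorial_zero, Nat.cast_one, one_mul, div_one]
  rw [← Real.rpow_add hp]
  norm_num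
  rw [Real.rpow_neg_one]
  exact inv_mul_cancel₀ hp.ne'

lemma ip_eq (k l : ℕ) : ip k l = if k = l then 1 else 0 := by
  have hz : ∀ m, ip 0 (m + 1) = 0 := by
    intro m
    have := ip_ladder 0 m
    simp at this
    rcases this with h | h
    · exfalso
      have : (0 : ℝ) < √((m : ℝ) + 1) := by positivity
      linarith
    · exact h
  induction l generalizing k with
  | zero =>
    cases k with
    | zero => simpa using ip_zero
    | succ k => rw [ip_comm, hz]; simp
  | succ l ih =>
    cases k with
    | zero => rw [hz]; simp
    | succ k =>
      have h := ip_ladder (k + 1) l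
      rw [Nat.add_sub_cancel, ih] at h
      have hp : (0 : ℝ) < √((l : ℝ) + 1) := by positivity
      by_cases hkl : k = l
      · subst hkl
        simp only [if_true, mul_one] at h ⊢
        push_cast at h
        exact (mul_left_cancel₀ hp.ne' (by rw [mul_one]; exact h)).symm
      · have : k + 1 ≠ l + 1 := by omega
        rw [if_neg hkl, mul_zero] at h
        rw [if_neg this]
        rcases mul_eq_zero.mp h.symm with h | h
        · exact absurd h hp.ne'
        · exact h

/-! ### Tensorized Hermite functions -/

def hR (n : ℕ) (α : Fin n → ℕ) (x : En n) : ℝ := ∏ j, hermite1 (α j) (x j)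

lemma hermiteFun_eq (n : ℕ) (α : Fin n → ℕ) (x : En n) : hermiteFun n α x = (hR n α x : ℂ) := by
  simp [hermiteFun, hR]

lemma hR_mul_integrable (n : ℕ) (α β : Fin n → ℕ) :
    Integrable (fun x : En n => hR n α x * hR n β x) := by
  have h : Integrable (fun y : Fin n → ℝ => ∏ i, (hermite1 (α i) (y i) * hermite1 (β i) (y i))) :=
    Integrable.fintype_prod (f := fun i t => hermite1 (α i) t * hermite1 (β i) t)
      (fun i => hermite1_mul_integrable (α i) (β i))
  have h2 := ((PiLp.volume_preserving_ofLp (Fin n)).integrable_comp_of_integrable h)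
  have e : (fun x : En n => hR n α x * hR n β x) =
      (fun y : Fin n → ℝ => ∏ i, (hermite1 (α i) (y i) * hermite1 (β i) (y i))) ∘ WithLp.ofLp := by
    ext x
    simp [hR, Finset.prod_mul_distrib]
  rw [e]
  exact h2

lemma hR_mul_integral (n : ℕ) (α β : Fin n → ℕ) :
    ∫ x : En n, hR n α x * hR n β x = if α = β then 1 else 0 := by
  have h1 : ∫ x : En n, hR n α x * hR n β x
      = ∫ y : Fin n → ℝ, ∏ i, (hermite1 (α i) (y i) * hermite1 (β i) (y i)) := by
    rw [← (PiLp.volume_preserving_ofLp (Fin n)).integral_comp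
      (MeasurableEquiv.toLp 2 (Fin n → ℝ)).symm.measurableEmbedding]
    congr 1
    ext x
    simp [hR, Finset.prod_mul_distrib]
  rw [h1, integral_fintype_prod_volume_eq_prod
    (fun i t => hermite1 (α i) t * hermite1 (β i) t)]
  have h2 : ∀ i, ∫ t, hermite1 (α i) t * hermite1 (β i) t = if α i = β i then 1 else 0 :=
    fun i => ip_eq (α i) (β i)
  simp_rw [h2]
  by_cases h : α = β
  · simp [h]
  · rw [if_neg h]
    obtain ⟨i, hi⟩ := Function.ne_iff.mp h
    exact Finset.prod_eq_zero (Finset.mem_univ i) (if_neg hi)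

/-- linear combination of Hermite functions -/
def comb (n : ℕ) (S : Finset (Fin n → ℕ)) (d : (Fin n → ℕ) → ℂ)
    (σ : (Fin n → ℕ) → (Fin n → ℕ)) (x : En n) : ℂ :=
  ∑ α ∈ S, d α * hermiteFun n (σ α) x

lemma comb_normSq (n : ℕ) (S : Finset (Fin n → ℕ)) (d : (Fin n → ℕ) → ℂ)
    (σ : (Fin n → ℕ) → (Fin n → ℕ)) (x : En n) :
    ‖comb n S d σ x‖ ^ 2 = ∑ α ∈ S, ∑ β ∈ S,
      (d α * (starRingEnd ℂ) (d β)).re * (hR n (σ α) x * hR n (σ β) x) := by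
  have h : ((‖comb n S d σ x‖ ^ 2 : ℝ) : ℂ) = ∑ α ∈ S, ∑ β ∈ S,
      (d α * (starRingEnd ℂ) (d β)) * ((hR n (σ α) x * hR n (σ β) x : ℝ) : ℂ) := by
    rw [Complex.ofReal_pow, ← Complex.mul_conj']
    unfold comb
    rw [map_sum, Finset.sum_mul_sum]
    refine Finset.sum_congr rfl fun α _ => Finset.sum_congr rfl fun β _ => ?_
    rw [hermiteFun_eq, hermiteFun_eq, map_mul, Complex.conj_ofReal]
    push_cast; ring
  have h2 := congrArg Complex.re h
  rw [Complex.ofReal_re] at h2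
  rw [h2, Complex.re_sum]
  refine Finset.sum_congr rfl fun α _ => ?_
  rw [Complex.re_sum]
  refine Finset.sum_congr rfl fun β _ => ?_
  rw [Complex.re_mul_ofReal]

lemma comb_integrable (n : ℕ) (S : Finset (Fin n → ℕ)) (d : (Fin n → ℕ) → ℂ)
    (σ : (Fin n → ℕ) → (Fin n → ℕ)) : Integrable (fun x => ‖comb n S d σ x‖ ^ 2) := by
  simp_rw [comb_normSq]
  exact integrable_finsetSum _ fun α _ => integrable_finsetSum _ fun β _ =>
    (hR_mul_integrable n _ _).const_mul _

lemma comb_integral (n : ℕ) (S : Finset (Fin n → ℕ)) (d : (Fin n → ℕ) → ℂ)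
    (σ : (Fin n → ℕ) → (Fin n → ℕ))
    (hσ : ∀ α ∈ S, ∀ β ∈ S, d α ≠ 0 → d β ≠ 0 → σ α = σ β → α = β) :
    ∫ x, ‖comb n S d σ x‖ ^ 2 = ∑ α ∈ S, ‖d α‖ ^ 2 := by
  simp_rw [comb_normSq]
  rw [integral_finsetSum _ (fun α _ => integrable_finsetSum _ fun β _ =>
    (hR_mul_integrable n _ _).const_mul _)]
  refine Finset.sum_congr rfl fun α hα => ?_
  rw [integral_finsetSum _ (fun β _ => (hR_mul_integrable n _ _).const_mul _)]
  simp_rw [integral_const_mul, hR_mul_integral]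
  rw [Finset.sum_eq_single α]
  · rw [if_pos rfl, mul_one, Complex.mul_conj']
    norm_cast
  · intro β hβ hne
    by_cases h1 : d α = 0
    · simp [h1]
    by_cases h2 : d β = 0
    · simp [h2]
    rw [if_neg, mul_zero]
    intro h
    exact hne (hσ α hα β hβ h1 h2 h).symm
  · intro h; exact absurd hα h

def up {n : ℕ} (j : Fin n) (α : Fin n → ℕ) : Fin n → ℕ := Function.update α j (α j + 1)
def dn {n : ℕ} (j : Fin n) (α : Fin n → ℕ) : Fin n → ℕ := Function.update α j (α j - 1)

lemma hR_update {n : ℕ} (j : Fin n) (α : Fin n → ℕ) (m : ℕ) (x : En n) :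
    hR n (Function.update α j m) x
      = hermite1 m (x j) * ∏ i ∈ Finset.univ.erase j, hermite1 (α i) (x i) := by
  unfold hR
  rw [← Finset.mul_prod_erase _ _ (Finset.mem_univ j)]
  rw [Function.update_self]
  congr 1
  refine Finset.prod_congr rfl fun i hi => ?_
  rw [Function.update_of_ne (Finset.ne_of_mem_erase hi)]

lemma hR_self {n : ℕ} (j : Fin n) (α : Fin n → ℕ) (x : En n) :
    hR n α x = hermite1 (α j) (x j) * ∏ i ∈ Finset.univ.erase j, hermite1 (α i) (x i) := by
  have := hR_update j α (α j) x
  rwa [Function.update_eq_self] at this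

lemma hR_x {n : ℕ} (j : Fin n) (α : Fin n → ℕ) (x : En n) :
    x j * hR n α x = (√2)⁻¹ * (√((α j : ℝ) + 1) * hR n (up j α) x + √(α j : ℝ) * hR n (dn j α) x)
    := by
  have h := hermite1_x (α j) (x j)
  rw [up, dn, hR_update, hR_update, hR_self j α]
  have hs : √2 ≠ (0 : ℝ) := by positivity
  field_simp
  linear_combination (∏ i ∈ Finset.univ.erase j, hermite1 (α i) (x i)) * h

lemma hR_hasFDerivAt {n : ℕ} (α : Fin n → ℕ) (x : En n) :
    HasFDerivAt (hR n α) (∑ i, (∏ k ∈ Finset.univ.erase i, hermite1 (α k) (x k)) •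
      (hd (α i) (x i) • (EuclideanSpace.proj i : En n →L[ℝ] ℝ))) x := by
  have h : ∀ i ∈ (Finset.univ : Finset (Fin n)), HasFDerivAt (fun y : En n => hermite1 (α i) (y i))
      (hd (α i) (x i) • (EuclideanSpace.proj i : En n →L[ℝ] ℝ)) x := by
    intro i _
    exact (hermite1_hasDerivAt (α i) (x i)).comp_hasFDerivAt x
      (EuclideanSpace.proj i : En n →L[ℝ] ℝ).hasFDerivAt
  have := HasFDerivAt.finsetProd h
  exact this

lemma hR_pderiv {n : ℕ} (j : Fin n) (α : Fin n → ℕ) (x : En n) :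
    fderiv ℝ (hR n α) x (EuclideanSpace.single j (1 : ℝ)) =
      (√2)⁻¹ * (√(α j : ℝ) * hR n (dn j α) x - √((α j : ℝ) + 1) * hR n (up j α) x) := by
  rw [(hR_hasFDerivAt α x).fderiv, up, dn, hR_update, hR_update]
  simp only [sum_apply, smul_apply, smul_eq_mul]
  rw [Finset.sum_eq_single j]
  · simp [hd]; ring
  · intro i _ hi
    simp [hi]
  · simp

lemma hermiteFun_hasFDerivAt {n : ℕ} (α : Fin n → ℕ) (x : En n) :
    HasFDerivAt (hermiteFun n α) (Complex.ofRealCLM ∘L fderiv ℝ (hR n α) x) x := by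
  have h := (hR_hasFDerivAt α x).differentiableAt.hasFDerivAt
  have h2 := Complex.ofRealCLM.hasFDerivAt.comp x h
  have e : hermiteFun n α = Complex.ofRealCLM ∘ hR n α := by
    ext y; simp [hermiteFun_eq]
  rw [e]; exact h2

lemma up_sum {n : ℕ} (j : Fin n) (α : Fin n → ℕ) : ∑ i, up j α i = ∑ i, α i + 1 := by
  unfold up
  rw [Finset.sum_update_of_mem (Finset.mem_univ j), ← Finset.add_sum_erase _ _ (Finset.mem_univ j)]
  rw [Finset.sdiff_singleton_eq_erase]; ring

lemma dn_sum {n : ℕ} (j : Fin n) (α : Fin n → ℕ) : ∑ i, dn j α i ≤ ∑ i, α i := by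
  refine Finset.sum_le_sum fun i _ => ?_
  unfold dn
  by_cases h : i = j
  · subst h; simp
  · simp [h]

lemma up_inj {n : ℕ} (j : Fin n) (α β : Fin n → ℕ) (h : up j α = up j β) : α = β := by
  ext i
  have := congrFun h i
  unfold up at this
  by_cases h : i = j
  · subst h; simpa using this
  · simpa [h] using this

lemma dn_inj {n : ℕ} (j : Fin n) (α β : Fin n → ℕ) (ha : α j ≠ 0) (hb : β j ≠ 0)
    (h : dn j α = dn j β) : α = β := by
  ext i
  have := congrFun h i
  unfold dn at this
  by_cases h : i = j
  · subst h; simp at this; omega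
  · simpa [h] using this

lemma span_rep {n N : ℕ} {g : En n → ℂ} (hg : g ∈ hermiteSpan n N) :
    ∃ (S : Finset (Fin n → ℕ)) (c : (Fin n → ℕ) → ℂ), (∀ α ∈ S, ∑ j, α j ≤ N) ∧
      g = comb n S c id := by
  have e : {g | ∃ α : Fin n → ℕ, (∑ j, α j) ≤ N ∧ g = hermiteFun n α}
      = hermiteFun n '' {α : Fin n → ℕ | (∑ j, α j) ≤ N} := by
    ext g; constructor
    · rintro ⟨α, h, rfl⟩; exact ⟨α, h, rfl⟩
    · rintro ⟨α, h, rfl⟩; exact ⟨α, h, rfl⟩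
  unfold hermiteSpan at hg
  rw [e, Finsupp.mem_span_image_iff_linearCombination] at hg
  obtain ⟨l, hl, rfl⟩ := hg
  refine ⟨l.support, l, fun α hα => (Finsupp.mem_supported _ _).mp hl hα, ?_⟩
  ext x
  simp [Finsupp.linearCombination_apply, Finsupp.sum, comb, Finset.sum_apply]

lemma comb_mem {n N : ℕ} (S : Finset (Fin n → ℕ)) (d : (Fin n → ℕ) → ℂ)
    (σ : (Fin n → ℕ) → (Fin n → ℕ)) (h : ∀ α ∈ S, ∑ j, σ α j ≤ N) :
    comb n S d σ ∈ hermiteSpan n N := by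
  have e : comb n S d σ = ∑ α ∈ S, d α • hermiteFun n (σ α) := by
    ext x; simp [comb, Finset.sum_apply]
  rw [e]
  exact Submodule.sum_mem _ fun α hα => Submodule.smul_mem _ _
    (Submodule.subset_span ⟨σ α, h α hα, rfl⟩)

lemma sq_bound (a b : ℂ) (s : ℂ) (hs : ‖s‖ ^ 2 = 1 / 2) :
    ‖s * (a + b)‖ ^ 2 ≤ ‖a‖ ^ 2 + ‖b‖ ^ 2 := by
  rw [norm_mul, mul_pow, hs]
  have h := norm_add_le a b
  have h0 := norm_nonneg (a + b)
  nlinarith [sq_nonneg (‖a‖ - ‖b‖)]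

/-- The common bound for multiplication by a coordinate and differentiation. -/
lemma ladder_bound {n N : ℕ} (j : Fin n) (S : Finset (Fin n → ℕ)) (c : (Fin n → ℕ) → ℂ)
    (hS : ∀ α ∈ S, ∑ j, α j ≤ N) (τ : ℂ) (hτ : ‖τ‖ = 1) (g' : En n → ℂ)
    (hg' : ∀ x, g' x = ((√2)⁻¹ : ℝ) *
      (comb n S (fun α => τ * (√((α j : ℝ) + 1) : ℝ) * c α) (up j) x
        + comb n S (fun α => (√(α j : ℝ) : ℝ) * c α) (dn j) x)) :
    g' ∈ hermiteSpan n (N + 1) ∧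
    ∫ x, ‖g' x‖ ^ 2 ≤ 2 * ((N : ℝ) + 1) * ∫ x, ‖comb n S c id x‖ ^ 2 := by
  constructor
  · have e : g' = (((√2)⁻¹ : ℝ) : ℂ) •
      (comb n S (fun α => τ * (√((α j : ℝ) + 1) : ℝ) * c α) (up j)
        + comb n S (fun α => (√(α j : ℝ) : ℝ) * c α) (dn j)) := by
      ext x; rw [hg']; simp
    rw [e]
    refine Submodule.smul_mem _ _ (Submodule.add_mem _ (comb_mem _ _ _ ?_) (comb_mem _ _ _ ?_))
    · intro α hα
      have := hS α hα
      rw [up_sum]; omega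
    · intro α hα
      exact ((dn_sum j α).trans (hS α hα)).trans (Nat.le_succ N)
  · have hs : ‖(((√2)⁻¹ : ℝ) : ℂ)‖ ^ 2 = 1 / 2 := by
      rw [Complex.norm_real, Real.norm_eq_abs, sq_abs, inv_pow, Real.sq_sqrt (by norm_num)]
      norm_num
    have h1 : ∫ x, ‖g' x‖ ^ 2 ≤
        ∫ x, (‖comb n S (fun α => τ * (√((α j : ℝ) + 1) : ℝ) * c α) (up j) x‖ ^ 2
        + ‖comb n S (fun α => (√(α j : ℝ) : ℝ) * c α) (dn j) x‖ ^ 2) := by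
      refine integral_mono_of_nonneg (Filter.Eventually.of_forall fun x => by positivity)
        ((comb_integrable _ _ _ _).add (comb_integrable _ _ _ _))
        (Filter.Eventually.of_forall fun x => ?_)
      simp only [hg']
      exact sq_bound _ _ _ hs
    refine h1.trans ?_
    rw [integral_add (comb_integrable _ _ _ _) (comb_integrable _ _ _ _),
      comb_integral _ _ _ _ (fun α _ β _ _ _ h => up_inj j α β h),
      comb_integral _ _ _ _ (fun α _ β _ ha hb h => dn_inj j α β
        (by intro h0; simp [h0] at ha) (by intro h0; simp [h0] at hb) h),
      comb_integral n S c id (fun α _ β _ _ _ h => h), ← Finset.sum_add_distrib, Finset.mul_sum]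
    refine Finset.sum_le_sum fun α hα => ?_
    rw [norm_mul, norm_mul, norm_mul, hτ, Complex.norm_real, Complex.norm_real, Real.norm_eq_abs,
      Real.norm_eq_abs, one_mul, mul_pow, mul_pow, sq_abs, sq_abs, Real.sq_sqrt (by positivity),
      Real.sq_sqrt (by positivity), ← add_mul]
    have hj : (α j : ℝ) ≤ N := by
      exact_mod_cast (Finset.single_le_sum (f := α) (fun i _ => Nat.zero_le _)
        (Finset.mem_univ j)).trans (hS α hα)
    gcongr
    linarith

lemma span_integrable {n N : ℕ} {g : En n → ℂ} (hg : g ∈ hermiteSpan n N) :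
    Integrable (fun x => ‖g x‖ ^ 2) := by
  obtain ⟨S, c, _, rfl⟩ := span_rep hg
  exact comb_integrable _ _ _ _

lemma mulx_bound {n N : ℕ} (j : Fin n) {g : En n → ℂ} (hg : g ∈ hermiteSpan n N) :
    (fun x => ((x j : ℝ) : ℂ) * g x) ∈ hermiteSpan n (N + 1) ∧
    ∫ x, ‖((x j : ℝ) : ℂ) * g x‖ ^ 2 ≤ 2 * ((N : ℝ) + 1) * ∫ x, ‖g x‖ ^ 2 := by
  obtain ⟨S, c, hS, rfl⟩ := span_rep hg
  refine ladder_bound j S c hS 1 (by simp) (fun x => ((x j : ℝ) : ℂ) * comb n S c id x) ?_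
  intro x
  simp only [comb, Finset.mul_sum, ← Finset.sum_add_distrib]
  refine Finset.sum_congr rfl fun α _ => ?_
  have h := congrArg (fun t : ℝ => (t : ℂ)) (hR_x j α x)
  simp only [hermiteFun_eq, id]
  push_cast at h ⊢
  linear_combination c α * h

lemma pderiv_bound {n N : ℕ} (j : Fin n) {g : En n → ℂ} (hg : g ∈ hermiteSpan n N) :
    pderiv1 j g ∈ hermiteSpan n (N + 1) ∧
    ∫ x, ‖pderiv1 j g x‖ ^ 2 ≤ 2 * ((N : ℝ) + 1) * ∫ x, ‖g x‖ ^ 2 := by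
  obtain ⟨S, c, hS, rfl⟩ := span_rep hg
  refine ladder_bound j S c hS (-1) (by simp) (pderiv1 j (comb n S c id)) ?_
  intro x
  have hD : HasFDerivAt (comb n S c id)
      (∑ α ∈ S, c α • (Complex.ofRealCLM ∘L fderiv ℝ (hR n α) x)) x := by
    have := HasFDerivAt.fun_sum (u := S) (fun α _ => (hermiteFun_hasFDerivAt α x).const_mul (c α))
    exact this
  unfold pderiv1
  rw [hD.fderiv]
  simp only [comb, Finset.mul_sum, ← Finset.sum_add_distrib, sum_apply]
  refine Finset.sum_congr rfl fun α _ => ?_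
  have h := congrArg (fun t : ℝ => (t : ℂ)) (hR_pderiv j α x)
  simp only [hermiteFun_eq, smul_apply, ContinuousLinearMap.comp_apply,
    Complex.ofRealCLM_apply, smul_eq_mul]
  push_cast at h ⊢
  linear_combination c α * h

/-! ### Iterated bounds -/

lemma jap_pos (n : ℕ) (x : En n) : 0 < jap n x := by unfold jap; positivity

lemma one_le_jap (n : ℕ) (x : En n) : 1 ≤ jap n x := by
  unfold jap
  rw [Real.one_le_sqrt]
  have := sq_nonneg ‖x‖
  linarith

lemma jap_sq (n : ℕ) (x : En n) : jap n x ^ 2 = 1 + ∑ j, (x j) ^ 2 := by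
  unfold jap
  rw [Real.sq_sqrt (by positivity), EuclideanSpace.real_norm_sq_eq]

lemma weight_bound {n : ℕ} (M : ℕ) (k : ℕ) : ∀ (N : ℕ) (g : En n → ℂ), g ∈ hermiteSpan n N →
    N + k ≤ M → Integrable (fun x => jap n x ^ (2 * k) * ‖g x‖ ^ 2) ∧
    ∫ x, jap n x ^ (2 * k) * ‖g x‖ ^ 2 ≤ (2 * ((n : ℝ) + 1) * M) ^ k * ∫ x, ‖g x‖ ^ 2 := by
  induction k with
  | zero =>
    intro N g hg _
    simpa using span_integrable hg
  | succ k ih =>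
    intro N g hg hM
    have e : (fun x => jap n x ^ (2 * (k + 1)) * ‖g x‖ ^ 2) = fun x =>
        jap n x ^ (2 * k) * ‖g x‖ ^ 2 +
          ∑ j, jap n x ^ (2 * k) * ‖((x j : ℝ) : ℂ) * g x‖ ^ 2 := by
      ext x
      rw [mul_add, pow_add, mul_one, jap_sq]
      simp only [norm_mul, mul_pow, Complex.norm_real, Real.norm_eq_abs, sq_abs]
      rw [mul_add, add_mul, mul_one, Finset.mul_sum, Finset.sum_mul]
      congr 1
      refine Finset.sum_congr rfl fun j _ => by ring
    obtain ⟨i0, b0⟩ := ih N g hg (by omega)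
    have hx := fun j => ih (N + 1) _ (mulx_bound j hg).1 (by omega)
    have is : Integrable (fun x => ∑ j, jap n x ^ (2 * k) * ‖((x j : ℝ) : ℂ) * g x‖ ^ 2) :=
      integrable_finsetSum _ fun j _ => (hx j).1
    rw [e]
    refine ⟨i0.add is, ?_⟩
    rw [integral_add i0 is, integral_finsetSum _ fun j _ => (hx j).1]
    set I := ∫ x, ‖g x‖ ^ 2 with hI
    have hI0 : 0 ≤ I := integral_nonneg fun x => by positivity
    set A := (2 * ((n : ℝ) + 1) * M) ^ k with hA
    have hA0 : 0 ≤ A := by positivity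
    have hNM : (N : ℝ) + 1 ≤ M := by exact_mod_cast (by omega : N + 1 ≤ M)
    have hN0 : (0 : ℝ) ≤ N := Nat.cast_nonneg N
    have hs : ∑ j : Fin n, ∫ x, jap n x ^ (2 * k) * ‖((x j : ℝ) : ℂ) * g x‖ ^ 2
        ≤ ∑ j : Fin n, A * (2 * M * I) := by
      refine Finset.sum_le_sum fun j _ => (hx j).2.trans ?_
      refine mul_le_mul_of_nonneg_left ((mulx_bound j hg).2.trans ?_) hA0
      rw [← hI]
      gcongr
    rw [Finset.sum_const, Finset.card_univ, Fintype.card_fin, nsmul_eq_mul] at hs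
    rw [pow_succ, ← hA]
    have h3 : A * I ≤ A * (2 * M * I) := by
      refine mul_le_mul_of_nonneg_left ?_ hA0
      nlinarith
    calc _ ≤ A * I + n * (A * (2 * M * I)) := add_le_add b0 hs
      _ ≤ A * (2 * M * I) + n * (A * (2 * M * I)) := by linarith
      _ = _ := by ring

lemma iter_bound {n : ℕ} (M : ℕ) (j : Fin n) (b : ℕ) {N : ℕ} {g : En n → ℂ}
    (hg : g ∈ hermiteSpan n N) (hM : N + b ≤ M) :
    (pderiv1 j)^[b] g ∈ hermiteSpan n (N + b) ∧
    ∫ x, ‖(pderiv1 j)^[b] g x‖ ^ 2 ≤ (2 * (M : ℝ)) ^ b * ∫ x, ‖g x‖ ^ 2 := by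
  induction b with
  | zero => simpa using hg
  | succ b ih =>
    obtain ⟨h1, h2⟩ := ih (by omega)
    obtain ⟨h3, h4⟩ := pderiv_bound j h1
    rw [Function.iterate_succ_apply']
    refine ⟨h3, h4.trans ?_⟩
    have hNM : ((N + b : ℕ) : ℝ) + 1 ≤ M := by exact_mod_cast (by omega : N + b + 1 ≤ M)
    have h5 : 0 ≤ ∫ x, ‖(pderiv1 j)^[b] g x‖ ^ 2 := integral_nonneg fun x => by positivity
    calc _ ≤ 2 * (M : ℝ) * ∫ x, ‖(pderiv1 j)^[b] g x‖ ^ 2 := by gcongr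
      _ ≤ 2 * (M : ℝ) * ((2 * (M : ℝ)) ^ b * ∫ x, ‖g x‖ ^ 2) := by gcongr
      _ = _ := by ring

lemma fold_bound {n : ℕ} (M : ℕ) (β : Fin n → ℕ) {N : ℕ} {g : En n → ℂ}
    (hg : g ∈ hermiteSpan n N) (L : List (Fin n)) (hM : N + (L.map β).sum ≤ M) :
    L.foldr (fun j g => (pderiv1 j)^[β j] g) g ∈ hermiteSpan n (N + (L.map β).sum) ∧
    ∫ x, ‖L.foldr (fun j g => (pderiv1 j)^[β j] g) g x‖ ^ 2
      ≤ (2 * (M : ℝ)) ^ ((L.map β).sum) * ∫ x, ‖g x‖ ^ 2 := by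
  induction L with
  | nil => simpa using hg
  | cons j L ih =>
    simp only [List.map_cons, List.sum_cons, List.foldr_cons] at hM ⊢
    obtain ⟨h1, h2⟩ := ih (by omega)
    obtain ⟨h3, h4⟩ := iter_bound M j (β j) h1 (by omega)
    refine ⟨?_, h4.trans ?_⟩
    · have : N + (β j + (L.map β).sum) = N + (L.map β).sum + β j := by ring
      rw [this]; exact h3
    · rw [pow_add, mul_assoc]
      gcongr

lemma pderivMulti_bound {n : ℕ} (M : ℕ) (β : Fin n → ℕ) {N : ℕ} {g : En n → ℂ}
    (hg : g ∈ hermiteSpan n N) (hM : N + ∑ j, β j ≤ M) :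
    pderivMulti β g ∈ hermiteSpan n (N + ∑ j, β j) ∧
    ∫ x, ‖pderivMulti β g x‖ ^ 2 ≤ (2 * (M : ℝ)) ^ (∑ j, β j) * ∫ x, ‖g x‖ ^ 2 := by
  have e : ∑ j, β j = ((List.finRange n).map β).sum := Fin.sum_univ_def β
  rw [e] at hM ⊢
  exact fold_bound M β hg (List.finRange n) hM

lemma integral_bound {n : ℕ} (r : ℝ) (k : ℕ) (hk : r ≤ k) (β : Fin n → ℕ) {N : ℕ}
    {f : En n → ℂ} (hf : f ∈ hermiteSpan n N) :
    ∫ x, ‖((jap n x ^ r : ℝ) : ℂ) * pderivMulti β f x‖ ^ 2 ≤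
      ((n : ℝ) + 1) ^ k * (2 * ((N + (∑ j, β j + k) : ℕ) : ℝ)) ^ (∑ j, β j + k) *
        ∫ x, ‖f x‖ ^ 2 := by
  set M := N + (∑ j, β j + k) with hM
  obtain ⟨h1, h2⟩ := pderivMulti_bound M β hf (by omega)
  obtain ⟨h3, h4⟩ := weight_bound M k _ _ h1 (by omega)
  have h5 : ∫ x, ‖((jap n x ^ r : ℝ) : ℂ) * pderivMulti β f x‖ ^ 2 ≤
      ∫ x, jap n x ^ (2 * k) * ‖pderivMulti β f x‖ ^ 2 := by
    refine integral_mono_of_nonneg (Filter.Eventually.of_forall fun x => by positivity) h3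
        (Filter.Eventually.of_forall fun x => ?_)
    simp only [norm_mul, mul_pow, Complex.norm_real, Real.norm_eq_abs, sq_abs]
    gcongr
    have hj := Real.rpow_le_rpow_of_exponent_le (one_le_jap n x) hk
    rw [Real.rpow_natCast] at hj
    have hp : 0 ≤ jap n x ^ r := Real.rpow_nonneg (jap_pos n x).le _
    calc (jap n x ^ r) ^ 2 ≤ (jap n x ^ k) ^ 2 := by gcongr
      _ = _ := by rw [← pow_mul, mul_comm]
  refine (h5.trans h4).trans ?_
  calc _ ≤ (2 * ((n : ℝ) + 1) * M) ^ k * ((2 * (M : ℝ)) ^ (∑ j, β j) * ∫ x, ‖f x‖ ^ 2) := by gcongr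
    _ = _ := by rw [pow_add, mul_pow, mul_pow, mul_pow, mul_pow]; ring

/-! ### Scalar estimates -/

lemma gamma_lower (p t : ℝ) (hp : 0 ≤ p) (ht : 0 ≤ t) :
    t ^ p ≤ Real.Gamma (p + 1) * Real.exp t := by
  have h1 : t ^ p * Real.exp (-t) ≤ Real.Gamma (p + 1) := by
    rw [Real.Gamma_eq_integral (by linarith)]
    have hint := Real.GammaIntegral_convergent (s := p + 1) (by linarith)
    calc t ^ p * Real.exp (-t) = ∫ x in Set.Ioi t, t ^ p * Real.exp (-x) := by
          rw [integral_const_mul, integral_exp_neg_Ioi]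
      _ ≤ ∫ x in Set.Ioi t, Real.exp (-x) * x ^ (p + 1 - 1) := by
          refine setIntegral_mono_on ?_ (hint.mono_set (Set.Ioi_subset_Ioi ht))
            measurableSet_Ioi ?_
          · exact (integrableOn_exp_neg_Ioi t).const_mul _
          · intro x hx
            rw [add_sub_cancel_right, mul_comm]
            have : t ≤ x := le_of_lt hx
            gcongr
      _ ≤ ∫ x in Set.Ioi 0, Real.exp (-x) * x ^ (p + 1 - 1) := by
          refine setIntegral_mono_set hint ?_ (Set.Ioi_subset_Ioi ht).eventuallyLE
          refine (ae_restrict_mem measurableSet_Ioi).mono fun x hx => ?_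
          have : (0 : ℝ) < x := hx
          simp only [Pi.zero_apply]
          positivity
  calc t ^ p = t ^ p * Real.exp (-t) * Real.exp t := by
        rw [mul_assoc, ← Real.exp_add]; simp
    _ ≤ _ := by gcongr

lemma sublinear (s D : ℝ) (hs : 0 < s) (hs1 : s < 1) (hD : 0 < D) :
    ∃ C : ℝ, 0 ≤ C ∧ ∀ m : ℝ, 0 ≤ m → m ^ s / D ≤ m + C := by
  set T := (1 / D) ^ (1 / (1 - s)) with hT
  have hT0 : 0 < T := by positivity
  refine ⟨T ^ s / D, by positivity, fun m hm => ?_⟩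
  rcases le_total m T with h | h
  · have : m ^ s / D ≤ T ^ s / D := by gcongr
    linarith
  · have hm0 : 0 < m := hT0.trans_le h
    have h1 : 1 / D ≤ m ^ (1 - s) := by
      calc 1 / D = T ^ (1 - s) := by
            rw [hT, ← Real.rpow_mul (by positivity), one_div_mul_cancel (by linarith),
              Real.rpow_one]
        _ ≤ _ := by gcongr
    have h2 : m ^ s / D ≤ m := by
      calc m ^ s / D = m ^ s * (1 / D) := by ring
        _ ≤ m ^ s * m ^ (1 - s) := by gcongr
        _ = m := by rw [← Real.rpow_add hm0]; simp
    have : 0 ≤ T ^ s / D := by positivity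
    linarith

lemma scalar_bound (ε δ C : ℝ) (hε : 0 < ε) (hε1 : ε ≤ 1) (hδ : 0 < δ)
    (hC : ∀ m : ℝ, 0 ≤ m → m ^ (1 - ε / 2) / δ ^ (2 - ε) ≤ m + C) (N m : ℕ) :
    (√((N + m : ℕ) : ℝ)) ^ m ≤ δ ^ m * Real.Gamma ((m : ℝ) / (2 - ε) + 1) *
      (Real.exp ((N : ℝ) ^ (1 - ε / 2) / δ ^ (2 - ε)) * (Real.exp m * Real.exp C)) := by
  set s := 1 - ε / 2 with hs
  set A : ℝ := ((N + m : ℕ) : ℝ) with hA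
  have hA0 : 0 ≤ A := Nat.cast_nonneg _
  have h2 : 0 < 2 - ε := by linarith
  set p := (m : ℝ) / (2 - ε) with hp
  have hp0 : 0 ≤ p := by positivity
  have h := gamma_lower p (A ^ s / δ ^ (2 - ε)) hp0 (by positivity)
  have e1 : (A ^ s / δ ^ (2 - ε)) ^ p = (√A) ^ m / δ ^ m := by
    rw [Real.div_rpow (by positivity) (by positivity), ← Real.rpow_mul hA0, ← Real.rpow_mul hδ.le,
      Real.sqrt_eq_rpow, ← Real.rpow_natCast, ← Real.rpow_natCast, ← Real.rpow_mul hA0]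
    congr 2
    · rw [hs, hp]; field_simp
    · rw [hp]; field_simp
  rw [e1, div_le_iff₀ (by positivity)] at h
  have h3 : A ^ s / δ ^ (2 - ε) ≤ (N : ℝ) ^ s / δ ^ (2 - ε) + (m + C) := by
    have h4 : A ^ s ≤ (N : ℝ) ^ s + (m : ℝ) ^ s := by
      rw [hA]; push_cast
      exact Real.rpow_add_le_add_rpow (Nat.cast_nonneg _) (Nat.cast_nonneg _) (by linarith)
        (by linarith)
    calc A ^ s / δ ^ (2 - ε) ≤ ((N : ℝ) ^ s + (m : ℝ) ^ s) / δ ^ (2 - ε) := by gcongr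
      _ = (N : ℝ) ^ s / δ ^ (2 - ε) + (m : ℝ) ^ s / δ ^ (2 - ε) := by ring
      _ ≤ _ := by gcongr; exact hC m (Nat.cast_nonneg _)
  have hG : 0 < Real.Gamma (p + 1) := Real.Gamma_pos_of_pos (by linarith)
  rw [← Real.exp_add, ← Real.exp_add]
  calc _ ≤ _ := h
    _ ≤ Real.Gamma (p + 1) * Real.exp ((N : ℝ) ^ s / δ ^ (2 - ε) + (m + C)) * δ ^ m := by gcongr
    _ = _ := by ring

/-- **Bernstein type estimates (Proposition "prop1", second estimate)**. -/
theorem bernstein_estimate_weight (n : ℕ) (ε : ℝ) (hε : 0 < ε) (hε1 : ε ≤ 1) :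
    ∃ K : ℝ, 1 < K ∧ ∀ δ : ℝ, 0 < δ → δ ≤ 1 → ∃ Kt : ℝ, 1 < Kt ∧
      ∀ (r : ℝ), 0 < r → ∀ (β : Fin n → ℕ) (N : ℕ), ∀ f ∈ hermiteSpan n N,
        L2norm n (fun x => ((jap n x ^ r : ℝ) : ℂ) * pderivMulti β f x) ≤
          Kt * K ^ ((((∑ j, β j) : ℕ) : ℝ) + r) * δ ^ ((∑ j, β j)) *
            ((n : ℝ) + 1) ^ (r / 2) *
            Real.Gamma ((r + (((∑ j, β j) : ℕ) : ℝ)) / (2 - ε) + 3) *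
            Real.exp ((N : ℝ) ^ (1 - ε / 2) / δ ^ (2 - ε)) * L2norm n f := by
  obtain ⟨K0, hK0⟩ : ∃ K0 : ℝ, K0 = 2 * Real.exp 1 := ⟨_, rfl⟩
  have he : 1 < Real.exp 1 := by simp
  have hK1 : 1 < K0 := by rw [hK0]; linarith
  refine ⟨K0, hK1, fun δ hδ hδ1 => ?_⟩
  have h2ε : 0 < 2 - ε := by linarith
  obtain ⟨C, hC0, hC⟩ := sublinear (1 - ε / 2) (δ ^ (2 - ε)) (by linarith) (by linarith)
    (by positivity)
  have hn0 : (0 : ℝ) ≤ n := Nat.cast_nonneg n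
  have hn1 : (1 : ℝ) ≤ ((n : ℝ) + 1) ^ (1 / 2 : ℝ) :=
    Real.one_le_rpow (by linarith) (by norm_num)
  have hKt : 1 < K0 * Real.exp C * ((n : ℝ) + 1) ^ (1 / 2 : ℝ) := by
    have h1 : 1 ≤ Real.exp C := Real.one_le_exp hC0
    have h2 : 1 < K0 * Real.exp C := by nlinarith
    nlinarith
  refine ⟨K0 * Real.exp C * ((n : ℝ) + 1) ^ (1 / 2 : ℝ), hKt, ?_⟩
  intro r hr β N f hf
  obtain ⟨b, hb⟩ : ∃ b : ℕ, b = ∑ j, β j := ⟨_, rfl⟩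
  obtain ⟨k, hk⟩ : ∃ k : ℕ, k = ⌈r⌉₊ := ⟨_, rfl⟩
  have hrk : r ≤ k := by rw [hk]; exact Nat.le_ceil r
  have hkr : (k : ℝ) ≤ r + 1 := by rw [hk]; exact (Nat.ceil_lt_add_one hr.le).le
  have hI := integral_bound r k hrk β hf
  rw [← hb] at hI ⊢
  have hsc := scalar_bound ε δ C hε hε1 hδ hC N (b + k)
  have hL : L2norm n (fun x => ((jap n x ^ r : ℝ) : ℂ) * pderivMulti β f x) ≤
      ((n : ℝ) + 1) ^ ((k : ℝ) / 2) * (√2 ^ (b + k) * √((N + (b + k) : ℕ) : ℝ) ^ (b + k)) *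
        L2norm n f := by
    unfold L2norm
    refine (Real.sqrt_le_sqrt hI).trans (le_of_eq ?_)
    rw [Real.sqrt_mul (by positivity), Real.sqrt_mul (by positivity)]
    congr 2
    · rw [Real.sqrt_eq_rpow, ← Real.rpow_natCast, ← Real.rpow_mul (by positivity)]
      congr 1; ring
    · rw [← mul_pow, ← Real.sqrt_mul (by norm_num)]
      have : (0 : ℝ) ≤ 2 * ((N + (b + k) : ℕ) : ℝ) := by positivity
      rw [Real.sqrt_eq_rpow, Real.sqrt_eq_rpow, ← Real.rpow_natCast, ← Real.rpow_natCast,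
        ← Real.rpow_mul this, ← Real.rpow_mul this, mul_comm ((b + k : ℕ) : ℝ)]
  refine hL.trans ?_
  have hf0 : 0 ≤ L2norm n f := Real.sqrt_nonneg _
  refine mul_le_mul_of_nonneg_right ?_ hf0
  have hbk : ((b + k : ℕ) : ℝ) ≤ (b : ℝ) + r + 1 := by push_cast; linarith
  have hb0 : (0 : ℝ) ≤ b := Nat.cast_nonneg b
  have hnk : ((n : ℝ) + 1) ^ ((k : ℝ) / 2) ≤
      ((n : ℝ) + 1) ^ (1 / 2 : ℝ) * ((n : ℝ) + 1) ^ (r / 2) := by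
    rw [← Real.rpow_add (by linarith)]
    exact Real.rpow_le_rpow_of_exponent_le (by linarith) (by linarith)
  have hKb : √2 ^ (b + k) * Real.exp ((b + k : ℕ) : ℝ) ≤ K0 * K0 ^ ((b : ℝ) + r) := by
    calc √2 ^ (b + k) * Real.exp ((b + k : ℕ) : ℝ) ≤ 2 ^ (b + k) * Real.exp 1 ^ (b + k) := by
          rw [← Real.exp_nat_mul, mul_one]
          have : √2 ≤ (2 : ℝ) := by
            rw [Real.sqrt_le_left (by norm_num)]; norm_num
          gcongr
      _ = K0 ^ ((b + k : ℕ) : ℝ) := by rw [← mul_pow, ← hK0, Real.rpow_natCast]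
      _ ≤ K0 ^ ((b : ℝ) + r + 1) := Real.rpow_le_rpow_of_exponent_le hK1.le hbk
      _ = _ := by rw [Real.rpow_add (by linarith), Real.rpow_one, mul_comm]
  have hδb : δ ^ (b + k) ≤ δ ^ b := pow_le_pow_of_le_one hδ.le hδ1 (by omega)
  have hk1 : (1 : ℝ) ≤ k := by
    have : 0 < k := by rw [hk]; exact Nat.ceil_pos.mpr hr
    exact_mod_cast this
  have hG0 : 0 < Real.Gamma (((b + k : ℕ) : ℝ) / (2 - ε) + 1) :=
    Real.Gamma_pos_of_pos (by positivity)
  have hG : Real.Gamma (((b + k : ℕ) : ℝ) / (2 - ε) + 1) ≤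
      Real.Gamma ((r + (b : ℝ)) / (2 - ε) + 3) := by
    have hp0 : 0 ≤ ((b + k : ℕ) : ℝ) / (2 - ε) := by positivity
    have h1 : Real.Gamma (((b + k : ℕ) : ℝ) / (2 - ε) + 1) ≤
        Real.Gamma (((b + k : ℕ) : ℝ) / (2 - ε) + 1 + 1) := by
      rw [Real.Gamma_add_one (s := ((b + k : ℕ) : ℝ) / (2 - ε) + 1) (by positivity)]
      nlinarith
    have h2 : ((b + k : ℕ) : ℝ) / (2 - ε) ≤ (r + (b : ℝ)) / (2 - ε) + 1 := by
      rw [div_add_one h2ε.ne']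
      gcongr
      linarith
    refine h1.trans (Real.Gamma_strictMonoOn_Ici.monotoneOn ?_ ?_ (by linarith))
    · simp only [Set.mem_Ici]; linarith
    · simp only [Set.mem_Ici]; linarith
  calc _ ≤ (((n : ℝ) + 1) ^ (1 / 2 : ℝ) * ((n : ℝ) + 1) ^ (r / 2)) * (√2 ^ (b + k) *
        (δ ^ (b + k) * Real.Gamma (((b + k : ℕ) : ℝ) / (2 - ε) + 1) *
      (Real.exp ((N : ℝ) ^ (1 - ε / 2) / δ ^ (2 - ε)) *
        (Real.exp ((b + k : ℕ) : ℝ) * Real.exp C)))) := by gcongr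
    _ = (√2 ^ (b + k) * Real.exp ((b + k : ℕ) : ℝ)) * δ ^ (b + k) *
        Real.Gamma (((b + k : ℕ) : ℝ) / (2 - ε) + 1) *
        (Real.exp C * ((n : ℝ) + 1) ^ (1 / 2 : ℝ) * ((n : ℝ) + 1) ^ (r / 2) *
          Real.exp ((N : ℝ) ^ (1 - ε / 2) / δ ^ (2 - ε))) := by ring
    _ ≤ (K0 * K0 ^ ((b : ℝ) + r)) * δ ^ b * Real.Gamma ((r + (b : ℝ)) / (2 - ε) + 3) *
        (Real.exp C * ((n : ℝ) + 1) ^ (1 / 2 : ℝ) * ((n : ℝ) + 1) ^ (r / 2) *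
          Real.exp ((N : ℝ) ^ (1 - ε / 2) / δ ^ (2 - ε))) := by gcongr
    _ = _ := by ring

end
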